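/- Let 𝒳, 𝒰, 𝒲 be arbitrary types, f : 𝒳 × 𝒰 × 𝒲 → 𝒳, Y ⊆ 𝒳 × 𝒰, and W : 𝒳 × 𝒰 → Set 𝒲. Call a set S ⊆ 𝒳 robust control invariant if for every x ∈ S there exists u with (x,u) ∈ Y such that f(x,u,w) ∈ S for all w ∈ W(x,u). For Ω ⊆ 𝒳 define Pre(Ω) = {x | there exists u with (x,u) ∈ Y such that for all w ∈ W(x,u), f(x,u,w) ∈ Ω}, and given X_f ⊆ 𝒳 define the sequence X₀ = X_f, X_{t+1} = Pre(X_t). Then X_t is robust control invariant for every t ∈ ℕ if and only if X_f is robust control invariant. -/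

import Mathlib

/-- The backward recursion `X₀ = X_f`, `X_{t+1} = Pre(X_t)` produces robust control
invariant sets at every step if and only if the seed set `X_f` is robust control
invariant. -/
theorem backward_recursion_invariant_iff
    {X U W : Type*} (f : X × U × W → X) (Y : Set (X × U))
    (Wset : X × U → Set W) (Xf : Set X) (Xseq : ℕ → Set X)
    (h0 : Xseq 0 = Xf)
    (hrec : ∀ t, Xseq (t + 1)
      = {x : X | ∃ u : U, (x, u) ∈ Y ∧ ∀ w ∈ Wset (x, u), f (x, u, w) ∈ Xseq t}) :
    (∀ t : ℕ, ∀ x ∈ Xseq t,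
        ∃ u : U, (x, u) ∈ Y ∧ ∀ w ∈ Wset (x, u), f (x, u, w) ∈ Xseq t)
      ↔ (∀ x ∈ Xf, ∃ u : U, (x, u) ∈ Y ∧ ∀ w ∈ Wset (x, u), f (x, u, w) ∈ Xf) := by
  subst h0
  constructor
  · intro h
    exact h 0
  · intro h t
    induction t with
    | zero => exact h
    | succ t ih =>
      intro x hx
      rw [hrec t] at hx
      obtain ⟨u, hu, hw⟩ := hx
      refine ⟨u, hu, fun w hwm => ?_⟩
      rw [hrec t]
      exact ih _ (hw w hwm)
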